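/- Let Γ be an alphabet with a distinguished blank symbol (blank = default) and Q a type of states. For a machine M : Q → Γ → Option (Q × Γ × (Option Turing.Dir)) define the step function on configurations (q, T) : Q × Turing.Tape Γ by: if M q T.head = none the machine halts, and if M q T.head = some (q', w, d) the next configuration is (q', Tape.move d (T.write w)) when d = some direction and (q', T.write w) when d = none (stay). Let M₁ and M₂ be two such machines, let c₀ be an initial configuration, and suppose both machines, started from c₀, produce the identical finite sequence of configurations c₀, c₁, …, cₙ and both halt at cₙ. Suppose further that at no step i < n the trivial blank case holds (i.e. it is not the case that the tape of cᵢ has entirely blank left and right half-tapes and the rule applied writes a blank symbol), and that every pair (q, s) on which M₁ or M₂ is defined (≠ none) actually occurs as (state, head symbol) of some cᵢ with i < n. Then M₁ = M₂. -/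

import Mathlib

/-- Apply an optional move direction to a tape: `none` means "stay" (no move). -/
def moveOpt {Γ : Type*} [Inhabited Γ] (d : Option Turing.Dir) (T : Turing.Tape Γ) :
    Turing.Tape Γ :=
  match d with
  | none => T
  | some d => Turing.Tape.move d T

/-- One step of a machine `M : Q → Γ → Option (Q × Γ × Option Turing.Dir)` on a
configuration (state, tape): `none` means the machine halts. -/
def step {Q Γ : Type*} [Inhabited Γ] (M : Q → Γ → Option (Q × Γ × Option Turing.Dir))
    (c : Q × Turing.Tape Γ) : Option (Q × Turing.Tape Γ) :=
  match M c.1 c.2.head with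
  | none => none
  | some (q', w, d) => some (q', moveOpt d (c.2.write w))

theorem listBlank_eventually {Γ : Type*} [Inhabited Γ] (L : Turing.ListBlank Γ) :
    ∃ N : ℕ, ∀ i ≥ N, L.nth i = default := by
  refine L.induction_on fun l => ⟨l.length, fun i hi => ?_⟩
  rw [Turing.ListBlank.nth_mk]
  exact List.getI_eq_default _ hi

theorem tape_eventually {Γ : Type*} [Inhabited Γ] (T : Turing.Tape Γ) :
    ∃ N : ℕ, ∀ i : ℤ, N < |i| → T.nth i = default := by
  obtain ⟨N₁, h₁⟩ := listBlank_eventually T.left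
  obtain ⟨N₂, h₂⟩ := listBlank_eventually T.right
  refine ⟨N₁ + N₂, fun i hi => ?_⟩
  match i with
  | 0 => simp at hi; omega
  | (n + 1 : ℕ) =>
    refine h₂ n ?_
    have : |((n + 1 : ℕ) : ℤ)| = n + 1 := by rw [abs_of_nonneg] <;> omega
    omega
  | -(n + 1 : ℕ) =>
    refine h₁ n ?_
    have : |(-(n + 1 : ℕ) : ℤ)| = n + 1 := by rw [abs_of_nonpos] <;> omega
    omega

def shiftOf : Option Turing.Dir → ℤ
  | none => 0
  | some Turing.Dir.left => -1
  | some Turing.Dir.right => 1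

theorem shiftOf_injective : Function.Injective shiftOf := by
  intro a b h
  rcases a with _ | _ | _ <;> rcases b with _ | _ | _ <;> simp_all [shiftOf]

theorem moveOpt_nth {Γ : Type*} [Inhabited Γ] (d : Option Turing.Dir) (T : Turing.Tape Γ)
    (i : ℤ) : (moveOpt d T).nth i = T.nth (i + shiftOf d) := by
  rcases d with _ | _ | _ <;> simp [moveOpt, shiftOf, sub_eq_add_neg]

theorem blank_of_shift {Γ : Type*} [Inhabited Γ] (T : Turing.Tape Γ) (w₁ w₂ : Γ) (k : ℤ)
    (hk : 0 < k) (h : ∀ x, (T.write w₁).nth x = (T.write w₂).nth (x + k)) :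
    T.left = default ∧ T.right = default ∧ w₁ = default ∧ w₂ = default := by
  have e : ∀ x, x ≠ 0 → (T.write w₁).nth x = (T.write w₂).nth x := by
    intro x hx
    simp [Turing.Tape.write_nth, hx]
  have hneg : ∀ a ≤ 0, (T.write w₂).nth a = default := by
    obtain ⟨N, hN⟩ := tape_eventually (T.write w₂)
    have key : ∀ m : ℕ, ∀ a ≤ 0, (T.write w₂).nth a = (T.write w₂).nth (a - m * k) := by
      intro m
      induction m with
      | zero => simp
      | succ m ih =>
        intro a ha
        have h1 := h (a - k)
        rw [sub_add_cancel, e _ (by omega)] at h1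
        rw [← h1, ih _ (by omega)]
        congr 1; push_cast; ring
    intro a ha
    rw [key (N + 1) a ha]
    apply hN
    rw [abs_of_nonpos] <;> push_cast <;> nlinarith
  have hpos : ∀ a ≥ 0, (T.write w₁).nth a = default := by
    obtain ⟨N, hN⟩ := tape_eventually (T.write w₁)
    have key : ∀ m : ℕ, ∀ a ≥ 0, (T.write w₁).nth a = (T.write w₁).nth (a + m * k) := by
      intro m
      induction m with
      | zero => simp
      | succ m ih =>
        intro a ha
        rw [h a, ← e _ (by omega), ih _ (by omega)]
        congr 1; push_cast; ring
    intro a ha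
    rw [key (N + 1) a ha]
    apply hN
    rw [abs_of_nonneg] <;> push_cast <;> nlinarith
  have hd : ∀ i, (default : Turing.ListBlank Γ).nth i = default := by
    intro i
    change (Turing.ListBlank.mk []).nth i = default
    simp
  refine ⟨?_, ?_, hpos 0 le_rfl, hneg 0 le_rfl⟩
  · apply Turing.ListBlank.ext
    intro i
    rw [hd]
    exact hneg (-(i + 1 : ℕ)) (by omega)
  · apply Turing.ListBlank.ext
    intro i
    rw [hd]
    exact hpos ((i + 1 : ℕ)) (by omega)

theorem rule_unique {Γ : Type*} [Inhabited Γ] (T : Turing.Tape Γ) (w₁ w₂ : Γ)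
    (d₁ d₂ : Option Turing.Dir)
    (h : moveOpt d₁ (T.write w₁) = moveOpt d₂ (T.write w₂))
    (hn : ¬ (T.left = default ∧ T.right = default ∧ w₁ = default)) :
    w₁ = w₂ ∧ d₁ = d₂ := by
  have hx : ∀ x, (T.write w₁).nth (x + shiftOf d₁) = (T.write w₂).nth (x + shiftOf d₂) := by
    intro x
    rw [← moveOpt_nth, ← moveOpt_nth, h]
  rcases lt_trichotomy (shiftOf d₁) (shiftOf d₂) with hlt | heq | hgt
  · obtain ⟨a, b, c, -⟩ := blank_of_shift T w₁ w₂ (shiftOf d₂ - shiftOf d₁) (by omega) (by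
      intro x
      have := hx (x - shiftOf d₁)
      rw [sub_add_cancel] at this
      rw [this]; congr 1; ring)
    exact absurd ⟨a, b, c⟩ hn
  · refine ⟨?_, shiftOf_injective heq⟩
    have := hx (-shiftOf d₁)
    rw [← heq, neg_add_cancel] at this
    exact this
  · obtain ⟨a, b, -, c⟩ := blank_of_shift T w₂ w₁ (shiftOf d₁ - shiftOf d₂) (by omega) (by
      intro x
      have := hx (x - shiftOf d₂)
      rw [sub_add_cancel] at this
      rw [← this]; congr 1; ring)
    exact absurd ⟨a, b, c⟩ hn

/-- The learning content of the paper's Theorem 1 (Universal Learning):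
if two machines produce the identical finite halting run `c 0, c 1, …, c n`,
no step is in the trivial blank case, and every transition rule of either machine is
actually used during the run, then the two machines are equal. -/
theorem machine_unique_of_run {Q Γ : Type*} [Inhabited Γ]
    (M₁ M₂ : Q → Γ → Option (Q × Γ × Option Turing.Dir))
    (n : ℕ) (c : ℕ → Q × Turing.Tape Γ)
    (hstep₁ : ∀ i < n, step M₁ (c i) = some (c (i + 1)))
    (hstep₂ : ∀ i < n, step M₂ (c i) = some (c (i + 1)))
    (hhalt₁ : step M₁ (c n) = none)
    (hhalt₂ : step M₂ (c n) = none)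
    (hnontriv₁ : ∀ i < n, ∀ q' w d, M₁ (c i).1 (c i).2.head = some (q', w, d) →
      ¬ ((c i).2.left = default ∧ (c i).2.right = default ∧ w = default))
    (hnontriv₂ : ∀ i < n, ∀ q' w d, M₂ (c i).1 (c i).2.head = some (q', w, d) →
      ¬ ((c i).2.left = default ∧ (c i).2.right = default ∧ w = default))
    (hcover : ∀ q s, M₁ q s ≠ none ∨ M₂ q s ≠ none →
      ∃ i < n, (c i).1 = q ∧ (c i).2.head = s) :
    M₁ = M₂ := by
  funext q s
  by_cases hne : M₁ q s ≠ none ∨ M₂ q s ≠ none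
  · obtain ⟨i, hi, rfl, rfl⟩ := hcover q s hne
    have h1 := hstep₁ i hi
    have h2 := hstep₂ i hi
    have h3 := hnontriv₁ i hi
    unfold step at h1 h2
    rcases e1 : M₁ (c i).1 (c i).2.head with _ | ⟨q₁, w₁, d₁⟩
    · simp [e1] at h1
    rcases e2 : M₂ (c i).1 (c i).2.head with _ | ⟨q₂, w₂, d₂⟩
    · simp [e2] at h2
    rw [e1] at h1
    rw [e2] at h2
    have h4 := Option.some.inj (h1.trans h2.symm)
    obtain ⟨hq, hT⟩ := Prod.mk.inj h4
    obtain ⟨hw, hd⟩ := rule_unique _ _ _ _ _ hT (h3 _ _ _ e1)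
    rw [hq, hw, hd]
  · push Not at hne
    rw [hne.1, hne.2]
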